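/- arXiv:1908.02903 — 2 statements merged into one kernel-verified Lean document; each statement's English description precedes it below -/
import Mathlib

section
/- Let μ be a compactly supported positive measure on ℝⁿ, n ≥ 3, with |μ|(B(x,r)) ≤ C_μ r^α for some α > n-2. Then the homogeneous Sobolev space Ḣ¹(ℝⁿ) embeds continuously into L²(μ): there is a constant C with ∫ |φ|² dμ ≤ C ‖φ‖²_{Ḣ¹} for all φ ∈ Ḣ¹(ℝⁿ). -/
open MeasureTheory Metric

/-!
If `φ` is `C¹` with compact support, then `‖φ x‖ ≤ ∫₀^∞ ‖Dφ (x + t z)‖ dt` for every `x` and every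
nonzero `z` in the unit ball `B`. Keeping `z` as a free variable, we take the norm of
`L^p(μ ⊗ ν|_B)` on both sides and move it inside the `t`-integral by Minkowski's inequality. By
Fubini, for fixed `t` the `p`-th power of the norm of the slice is
`t⁻ᵈ ∫ μ(B(y, t)) ‖Dφ y‖^p dν(y) ≤ t⁻ᵈ Q(t) ‖Dφ‖_p^p`, where `Q(t) = sup_y μ(B(y, t))`. It remains
to see that `∫₀^∞ (t⁻ᵈ Q(t))^(1/p) dt` is finite: near `0` this follows from `Q(t) ≤ C t^α` with
`α > d - p`, near `∞` from `Q(t) ≤ μ(E)` and `p < d`.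
-/

open Module (finrank)
open Set (Ioi Ioc Icc)
open scoped ENNReal NNReal

section Minkowski

variable {X T : Type*} [MeasurableSpace X] [MeasurableSpace T] {μ : Measure X} {τ : Measure T}
  {p : ℝ}

lemma rpow_lintegral_mul_le_of_one_le (hp : 1 ≤ p) {w h : T → ℝ≥0∞} (hw : Measurable w)
    (hh : Measurable h) :
    (∫⁻ t, w t * h t ∂τ) ^ p ≤ (∫⁻ t, w t ∂τ) ^ (p - 1) * ∫⁻ t, w t * h t ^ p ∂τ := by
  have hp₀ : 0 < p := one_pos.trans_le hp
  have h_withDensity {g : T → ℝ≥0∞} (hg : Measurable g) :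
      ∫⁻ t, g t ∂τ.withDensity w = ∫⁻ t, w t * g t ∂τ :=
    lintegral_withDensity_eq_lintegral_mul τ hw hg
  calc (∫⁻ t, w t * h t ∂τ) ^ p = eLpNorm' h 1 (τ.withDensity w) ^ p := by
        simp [eLpNorm', h_withDensity hh]
    _ ≤ (eLpNorm' h p (τ.withDensity w) * τ.withDensity w Set.univ ^ (1 / 1 - 1 / p)) ^ p := by
        gcongr
        exact eLpNorm'_le_eLpNorm'_mul_rpow_measure_univ one_pos hp hh.aestronglyMeasurable
    _ = (∫⁻ t, w t ∂τ) ^ (p - 1) * ∫⁻ t, h t ^ p ∂τ.withDensity w := by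
        rw [ENNReal.mul_rpow_of_nonneg _ _ hp₀.le, ← lintegral_rpow_enorm_eq_rpow_eLpNorm' hp₀,
          ← ENNReal.rpow_mul, withDensity_apply _ MeasurableSet.univ, Measure.restrict_univ,
          mul_comm, show (1 / 1 - 1 / p) * p = p - 1 by field_simp]
        simp only [enorm_eq_self]
    _ = _ := by rw [h_withDensity (hh.pow_const p)]

lemma lintegral_rpow_inv_eLpNorm'_mul_le_one (hp : 0 < p) {g : X → ℝ≥0∞} (hg : Measurable g) :
    ∫⁻ x, ((eLpNorm' g p μ)⁻¹ * g x) ^ p ∂μ ≤ 1 := by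
  simp only [ENNReal.mul_rpow_of_nonneg _ _ hp.le]
  have h_norm : ∫⁻ x, g x ^ p ∂μ = eLpNorm' g p μ ^ p := by
    simpa only [enorm_eq_self] using lintegral_rpow_enorm_eq_rpow_eLpNorm' (f := g) hp
  rw [lintegral_const_mul _ (hg.pow_const p), h_norm, ← ENNReal.mul_rpow_of_nonneg _ _ hp.le]
  exact ENNReal.rpow_le_one (ENNReal.inv_mul_le_one _) hp.le

variable [SFinite μ] {f : X → T → ℝ≥0∞}

lemma measurable_eLpNorm'_left (hf : Measurable (Function.uncurry f)) :
    Measurable fun t => eLpNorm' (f · t) p μ := by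
  have hfp : Measurable fun q : X × T => f q.1 q.2 ^ p := hf.pow_const p
  simpa only [eLpNorm', enorm_eq_self] using hfp.lintegral_prod_left'.pow_const (1 / p)

variable [SFinite τ]

lemma ae_ae_eq_eLpNorm'_mul_inv_mul (hp : 0 < p) (hf : Measurable (Function.uncurry f))
    (h_fin : ∫⁻ t, eLpNorm' (f · t) p μ ∂τ ≠ ∞) :
    ∀ᵐ x ∂μ, ∀ᵐ t ∂τ, f x t = eLpNorm' (f · t) p μ * ((eLpNorm' (f · t) p μ)⁻¹ * f x t) := by
  set N : T → ℝ≥0∞ := fun t => eLpNorm' (f · t) p μ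
  have hN : Measurable N := measurable_eLpNorm'_left hf
  have h_swap : Measurable fun q : T × X => f q.2 q.1 := hf.comp measurable_swap
  have h_meas : MeasurableSet {q : T × X | f q.2 q.1 = N q.1 * ((N q.1)⁻¹ * f q.2 q.1)} :=
    measurableSet_eq_fun h_swap (by fun_prop)
  refine (Measure.ae_ae_comm h_meas).1 ?_
  filter_upwards [ae_lt_top hN h_fin] with t ht
  obtain h_zero | h_ne := eq_or_ne (N t) 0
  · filter_upwards [ae_eq_zero_of_eLpNorm'_eq_zero hp.le
      (hf.comp measurable_prodMk_right).aestronglyMeasurable h_zero] with x hx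
    calc f x t = 0 := hx
      _ = N t * ((N t)⁻¹ * f x t) := by rw [h_zero, zero_mul]
  · exact .of_forall fun x => by rw [← mul_assoc, ENNReal.mul_inv_cancel h_ne ht.ne, one_mul]

-- Jensen's inequality in `t`, with respect to the weight `‖f (·, t)‖_p dτ(t)`, followed by Tonelli.
theorem eLpNorm'_lintegral_le_lintegral_eLpNorm' (hp : 1 ≤ p)
    (hf : Measurable (Function.uncurry f)) :
    eLpNorm' (fun x => ∫⁻ t, f x t ∂τ) p μ ≤ ∫⁻ t, eLpNorm' (f · t) p μ ∂τ := by
  have hp₀ : 0 < p := one_pos.trans_le hp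
  set N : T → ℝ≥0∞ := fun t => eLpNorm' (f · t) p μ
  have hN : Measurable N := measurable_eLpNorm'_left hf
  obtain h_top | h_fin := eq_or_ne (∫⁻ t, N t ∂τ) ∞
  · exact h_top ▸ le_top
  have h_meas : Measurable fun q : X × T => N q.2 * ((N q.2)⁻¹ * f q.1 q.2) ^ p := by fun_prop
  have h_inner (t) : ∫⁻ x, N t * ((N t)⁻¹ * f x t) ^ p ∂μ =
      N t * ∫⁻ x, ((N t)⁻¹ * f x t) ^ p ∂μ :=
    lintegral_const_mul _ (((hf.comp measurable_prodMk_right).const_mul _).pow_const p)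
  have h_jensen : ∀ᵐ x ∂μ, (∫⁻ t, f x t ∂τ) ^ p ≤
      (∫⁻ t, N t ∂τ) ^ (p - 1) * ∫⁻ t, N t * ((N t)⁻¹ * f x t) ^ p ∂τ := by
    filter_upwards [ae_ae_eq_eLpNorm'_mul_inv_mul hp₀ hf h_fin] with x hx
    rw [lintegral_congr_ae hx]
    exact rpow_lintegral_mul_le_of_one_le hp hN (hN.inv.mul (hf.comp measurable_prodMk_left))
  have h_pow : ∫⁻ x, (∫⁻ t, f x t ∂τ) ^ p ∂μ ≤ (∫⁻ t, N t ∂τ) ^ p := calc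
    _ ≤ ∫⁻ x, (∫⁻ t, N t ∂τ) ^ (p - 1) * ∫⁻ t, N t * ((N t)⁻¹ * f x t) ^ p ∂τ ∂μ :=
        lintegral_mono_ae h_jensen
    _ = (∫⁻ t, N t ∂τ) ^ (p - 1) * ∫⁻ t, N t * ∫⁻ x, ((N t)⁻¹ * f x t) ^ p ∂μ ∂τ := by
        rw [lintegral_const_mul _ h_meas.lintegral_prod_right',
          lintegral_lintegral_swap h_meas.aemeasurable]
        simp only [h_inner]
    _ ≤ (∫⁻ t, N t ∂τ) ^ (p - 1) * ∫⁻ t, N t * 1 ∂τ := by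
        gcongr with t
        exact lintegral_rpow_inv_eLpNorm'_mul_le_one hp₀ (hf.comp measurable_prodMk_right)
    _ = (∫⁻ t, N t ∂τ) ^ p := by
        simpa using (ENNReal.rpow_add_of_nonneg (x := ∫⁻ t, N t ∂τ) (p - 1) 1 (by linarith)
          zero_le_one).symm
  simpa [eLpNorm', hp₀.ne'] using ENNReal.rpow_le_rpow h_pow (by positivity : 0 ≤ 1 / p)

end Minkowski

lemma eLpNorm'_comp_fst {X Y F : Type*} [MeasurableSpace X] [MeasurableSpace Y]
    [NormedAddCommGroup F] {μ : Measure X} {ν : Measure Y} [SFinite ν] {p : ℝ} (hp : 0 < p)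
    {f : X → F} (hf : AEStronglyMeasurable f μ) :
    eLpNorm' (fun q : X × Y => f q.1) p (μ.prod ν) = ν Set.univ ^ (1 / p) * eLpNorm' f p μ := by
  simp only [eLpNorm']
  have h := lintegral_prod_mul (ν := ν) (hf.enorm.pow_const p) (aemeasurable_const (b := 1))
  simp only [mul_one, lintegral_const, one_mul] at h
  rw [h, mul_comm, ENNReal.mul_rpow_of_nonneg _ _ (by positivity)]

/-- The concentration function `Q_μ(r) = sup_x μ(B(x, r))`, the largest mass that `μ` gives to a
ball of radius `r`. -/
noncomputable def ballConcentration {X : Type*} [PseudoMetricSpace X] [MeasurableSpace X]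
    (μ : Measure X) (r : ℝ) : ℝ≥0∞ :=
  ⨆ x, μ (ball x r)

/-- The integral `∫₀^∞ (Q_μ(t) / t ^ d) ^ (1 / p) dt` of the concentration function; its finiteness
is a sufficient condition on `μ` for the trace inequality in dimension `d` with exponent `p`. -/
noncomputable def concentrationIntegral {X : Type*} [PseudoMetricSpace X] [MeasurableSpace X]
    (μ : Measure X) (d : ℕ) (p : ℝ) : ℝ≥0∞ :=
  ∫⁻ t in Ioi (0 : ℝ), (ENNReal.ofReal (t ^ d)⁻¹ * ballConcentration μ t) ^ (1 / p)

section Concentration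

variable {X : Type*} [PseudoMetricSpace X] [MeasurableSpace X] {μ : Measure X}

lemma measure_ball_le_ballConcentration (x : X) (r : ℝ) : μ (ball x r) ≤ ballConcentration μ r :=
  le_iSup (fun x => μ (ball x r)) x

lemma ballConcentration_le_measure_univ (r : ℝ) : ballConcentration μ r ≤ μ Set.univ :=
  iSup_le fun _ => measure_mono (Set.subset_univ _)

lemma ballConcentration_mono : Monotone (ballConcentration μ) :=
  fun _ _ h => iSup_mono fun _ => measure_mono (ball_subset_ball h)

lemma setLIntegral_Ioc_rpow_ne_top {s : ℝ} (hs : -1 < s) (b : ℝ) :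
    ∫⁻ t in Ioc 0 b, ENNReal.ofReal (t ^ s) ≠ ∞ :=
  (intervalIntegral.intervalIntegrable_rpow' hs (a := 0) (b := b)).1.setLIntegral_lt_top.ne

lemma setLIntegral_Ioi_rpow_ne_top {s a : ℝ} (hs : s < -1) (ha : 0 < a) :
    ∫⁻ t in Ioi a, ENNReal.ofReal (t ^ s) ≠ ∞ :=
  (integrableOn_Ioi_rpow_of_lt hs ha).setLIntegral_lt_top.ne

lemma setLIntegral_ofReal_inv_pow_mul_rpow_le {d : ℕ} {p β : ℝ} (hp : 0 < p) {s : Set ℝ}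
    (hs : MeasurableSet s) (hs₀ : s ⊆ Ioi 0) {Q : ℝ → ℝ≥0∞} {C : ℝ≥0∞}
    (hQ : ∀ t ∈ s, Q t ≤ C * ENNReal.ofReal (t ^ β)) :
    ∫⁻ t in s, (ENNReal.ofReal (t ^ d)⁻¹ * Q t) ^ (1 / p) ≤
      C ^ (1 / p) * ∫⁻ t in s, ENNReal.ofReal (t ^ ((β - d) / p)) := by
  rw [← lintegral_const_mul _ (by fun_prop)]
  refine setLIntegral_mono' hs fun t ht => ?_
  have ht₀ : 0 < t := hs₀ ht
  have h_pow : (t ^ d)⁻¹ * t ^ β = t ^ (β - d) := by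
    rw [Real.rpow_sub ht₀, Real.rpow_natCast, div_eq_inv_mul]
  calc (ENNReal.ofReal (t ^ d)⁻¹ * Q t) ^ (1 / p)
      ≤ (ENNReal.ofReal (t ^ d)⁻¹ * (C * ENNReal.ofReal (t ^ β))) ^ (1 / p) := by
        gcongr
        exact hQ t ht
    _ = C ^ (1 / p) * ENNReal.ofReal (t ^ ((β - d) / p)) := by
        rw [mul_left_comm, ← ENNReal.ofReal_mul (by positivity), h_pow,
          ENNReal.mul_rpow_of_nonneg _ _ (by positivity),
          ENNReal.ofReal_rpow_of_nonneg (by positivity) (by positivity), ← Real.rpow_mul ht₀.le,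
          mul_one_div]

lemma concentrationIntegral_ne_top [IsFiniteMeasure μ] {d : ℕ} {p α C : ℝ} (hp : 0 < p)
    (hpd : p < d) (hα : d - p < α)
    (hμ : ∀ x r, 0 < r → μ (ball x r) ≤ ENNReal.ofReal (C * r ^ α)) :
    concentrationIntegral μ d p ≠ ∞ := by
  have hQ_small : ∀ t ∈ Ioc (0 : ℝ) 1,
      ballConcentration μ t ≤ ENNReal.ofReal C * ENNReal.ofReal (t ^ α) := fun t ht => by
    rw [← ENNReal.ofReal_mul' (Real.rpow_nonneg ht.1.le α)]
    exact iSup_le fun x => hμ x t ht.1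
  have hQ_large : ∀ t ∈ Ioi (1 : ℝ),
      ballConcentration μ t ≤ μ Set.univ * ENNReal.ofReal (t ^ (0 : ℝ)) := fun t _ => by
    simpa using ballConcentration_le_measure_univ t
  have h_exp_small : -1 < (α - d) / p := by rw [lt_div_iff₀ hp]; linarith
  have h_exp_large : (0 - d) / p < -1 := by rw [div_lt_iff₀ hp]; linarith
  rw [concentrationIntegral, ← Set.Ioc_union_Ioi_eq_Ioi zero_le_one,
    lintegral_union measurableSet_Ioi Set.Ioc_disjoint_Ioi_same]
  refine ENNReal.add_ne_top.2 ⟨?_, ?_⟩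
  · exact ne_top_of_le_ne_top
      (ENNReal.mul_ne_top (by finiteness) (setLIntegral_Ioc_rpow_ne_top h_exp_small 1))
      (setLIntegral_ofReal_inv_pow_mul_rpow_le hp measurableSet_Ioc Set.Ioc_subset_Ioi_self
        hQ_small)
  · exact ne_top_of_le_ne_top
      (ENNReal.mul_ne_top (by finiteness) (setLIntegral_Ioi_rpow_ne_top h_exp_large one_pos))
      (setLIntegral_ofReal_inv_pow_mul_rpow_le hp measurableSet_Ioi
        (Set.Ioi_subset_Ioi zero_le_one) hQ_large)

lemma lintegral_setLIntegral_ball [OpensMeasurableSpace X] [SecondCountableTopology X] [SFinite μ]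
    {ν : Measure X} [SFinite ν] {g : X → ℝ≥0∞} (hg : Measurable g) (r : ℝ) :
    ∫⁻ x, ∫⁻ y in ball x r, g y ∂ν ∂μ = ∫⁻ y, μ (ball y r) * g y ∂ν := by
  have hs : MeasurableSet {q : X × X | dist q.2 q.1 < r} :=
    measurableSet_lt (by fun_prop) measurable_const
  have h_swap := lintegral_lintegral_swap (μ := μ) (ν := ν)
    (f := fun x y => {q : X × X | dist q.2 q.1 < r}.indicator (fun q => g q.2) (x, y))
    ((hg.comp measurable_snd).indicator hs).aemeasurable
  calc ∫⁻ x, ∫⁻ y in ball x r, g y ∂ν ∂μ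
      = ∫⁻ x, ∫⁻ y, {q : X × X | dist q.2 q.1 < r}.indicator (fun q => g q.2) (x, y) ∂ν ∂μ := by
        simp_rw [← lintegral_indicator measurableSet_ball]
        rfl
    _ = ∫⁻ y, ∫⁻ _ in ball y r, g y ∂μ ∂ν := by
        rw [h_swap]
        simp_rw [← lintegral_indicator measurableSet_ball]
        simp [Set.indicator, dist_comm]
    _ = ∫⁻ y, μ (ball y r) * g y ∂ν := by simp only [setLIntegral_const, mul_comm]

end Concentration

section Trace

variable {E F : Type*} [NormedAddCommGroup E] [NormedSpace ℝ E] [NormedAddCommGroup F]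
  [NormedSpace ℝ F]

lemma enorm_le_lintegral_Ioi_deriv_of_hasCompactSupport {f : ℝ → F} (hf : ContDiff ℝ 1 f)
    (h_supp : HasCompactSupport f) (a : ℝ) : ‖f a‖ₑ ≤ ∫⁻ t in Ioi a, ‖deriv f t‖ₑ := by
  rw [hasCompactSupport_iff_eventuallyEq, Filter.coclosedCompact_eq_cocompact] at h_supp
  obtain ⟨b, hab, hfb⟩ :=
    ((Filter.eventually_ge_atTop a).and (h_supp.filter_mono atTop_le_cocompact)).exists
  calc ‖f a‖ₑ = ‖f b - f a‖ₑ := by simp [hfb]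
    _ ≤ ∫⁻ t in Icc a b, ‖deriv f t‖ₑ :=
        enorm_sub_le_lintegral_deriv_of_contDiffOn_Icc hf.contDiffOn hab
    _ ≤ ∫⁻ t in Set.Ici a, ‖deriv f t‖ₑ := lintegral_mono_set Set.Icc_subset_Ici_self
    _ = ∫⁻ t in Ioi a, ‖deriv f t‖ₑ := by rw [restrict_Ioi_eq_restrict_Ici]

lemma enorm_le_mul_lintegral_enorm_fderiv_ray {φ : E → F} (hφ : ContDiff ℝ 1 φ)
    (h_supp : HasCompactSupport φ) (x : E) {z : E} (hz : z ≠ 0) :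
    ‖φ x‖ₑ ≤ (∫⁻ t in Ioi (0 : ℝ), ‖fderiv ℝ φ (x + t • z)‖ₑ) * ‖z‖ₑ := by
  have h_emb : Topology.IsClosedEmbedding fun t : ℝ => x + t • z :=
    (Homeomorph.addLeft x).isClosedEmbedding.comp (isClosedEmbedding_smul_left hz)
  have h_line (t : ℝ) : HasDerivAt (fun t : ℝ => x + t • z) z t := by
    simpa using ((hasDerivAt_id t).smul_const z).const_add x
  have h_deriv (t : ℝ) : deriv (fun t : ℝ => φ (x + t • z)) t = fderiv ℝ φ (x + t • z) z :=
    ((hφ.differentiable one_ne_zero _).hasFDerivAt.comp_hasDerivAt t (h_line t)).deriv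
  calc ‖φ x‖ₑ = ‖φ (x + (0 : ℝ) • z)‖ₑ := by simp
    _ ≤ ∫⁻ t in Ioi (0 : ℝ), ‖deriv (fun t : ℝ => φ (x + t • z)) t‖ₑ :=
        enorm_le_lintegral_Ioi_deriv_of_hasCompactSupport (by fun_prop)
          (h_supp.comp_isClosedEmbedding h_emb) 0
    _ ≤ ∫⁻ t in Ioi (0 : ℝ), ‖fderiv ℝ φ (x + t • z)‖ₑ * ‖z‖ₑ := by
        gcongr with t
        exact h_deriv t ▸ ContinuousLinearMap.le_opENorm _ _
    _ = _ := lintegral_mul_const' _ _ enorm_ne_top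

variable [FiniteDimensional ℝ E] [MeasurableSpace E] [BorelSpace E] {μ ν : Measure E}
  [ν.IsAddHaarMeasure]

lemma setLIntegral_unitBall_comp_add_smul (g : E → ℝ≥0∞) (x : E) {t : ℝ} (ht : 0 < t) :
    ∫⁻ z in ball 0 1, g (x + t • z) ∂ν =
      ENNReal.ofReal (t ^ finrank ℝ E)⁻¹ * ∫⁻ y in ball x t, g y ∂ν := by
  have h_map : ν.map (fun z => x + t • z) = ENNReal.ofReal (t ^ finrank ℝ E)⁻¹ • ν := by
    rw [show (fun z => x + t • z) = (x + ·) ∘ (t • ·) from rfl,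
      ← Measure.map_map (measurable_const_add x) (measurable_const_smul t),
      Measure.map_addHaar_smul ν ht.ne', Measure.map_smul, map_add_left_eq_self,
      abs_of_pos (by positivity)]
  have h_preimage : (fun z => x + t • z) ⁻¹' ball x t = ball 0 1 := by
    ext z
    simp [norm_smul, abs_of_pos ht, mul_lt_iff_lt_one_right ht]
  have h_emb : MeasurableEmbedding fun z : E => x + t • z :=
    (measurableEmbedding_addLeft x).comp (measurableEmbedding_const_smul₀ ht.ne')
  rw [← h_preimage, ← h_emb.lintegral_map, ← h_emb.restrict_map, h_map, Measure.restrict_smul,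
    lintegral_smul_measure, smul_eq_mul]

lemma lintegral_setLIntegral_unitBall_comp_add_smul_le [SFinite μ] {g : E → ℝ≥0∞}
    (hg : Measurable g) {t : ℝ} (ht : 0 < t) :
    ∫⁻ x, ∫⁻ z in ball 0 1, g (x + t • z) ∂ν ∂μ ≤
      ENNReal.ofReal (t ^ finrank ℝ E)⁻¹ * ballConcentration μ t * ∫⁻ y, g y ∂ν := by
  simp only [setLIntegral_unitBall_comp_add_smul g _ ht]
  rw [lintegral_const_mul' _ _ ENNReal.ofReal_ne_top, lintegral_setLIntegral_ball hg, mul_assoc,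
    ← lintegral_const_mul _ hg]
  gcongr with y
  exact measure_ball_le_ballConcentration y t

lemma setLIntegral_eLpNorm'_prod_unitBall_le [SFinite μ] {p : ℝ} (hp : 0 < p) {g : E → ℝ≥0∞}
    (hg : Measurable g) :
    ∫⁻ t in Ioi (0 : ℝ),
        eLpNorm' (fun q : E × E => g (q.1 + t • q.2)) p (μ.prod (ν.restrict (ball 0 1))) ≤
      concentrationIntegral μ (finrank ℝ E) p * eLpNorm' g p ν := by
  have h_slice : ∀ t ∈ Ioi (0 : ℝ),
      eLpNorm' (fun q : E × E => g (q.1 + t • q.2)) p (μ.prod (ν.restrict (ball 0 1))) ≤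
        (ENNReal.ofReal (t ^ finrank ℝ E)⁻¹ * ballConcentration μ t) ^ (1 / p) *
          eLpNorm' g p ν := fun t ht => by
    have h_meas : Measurable fun q : E × E => g (q.1 + t • q.2) ^ p := by fun_prop
    simp only [eLpNorm', enorm_eq_self]
    rw [lintegral_prod _ h_meas.aemeasurable, ← ENNReal.mul_rpow_of_nonneg _ _ (by positivity)]
    gcongr
    exact lintegral_setLIntegral_unitBall_comp_add_smul_le (hg.pow_const p) ht
  have h_meas := (ballConcentration_mono (μ := μ)).measurable
  rw [concentrationIntegral, ← lintegral_mul_const _ (by fun_prop)]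
  exact setLIntegral_mono' measurableSet_Ioi h_slice

theorem measure_ball_rpow_mul_eLpNorm'_le [SFinite μ] [Nontrivial E] {p : ℝ} (hp : 1 ≤ p)
    {φ : E → F} (hφ : ContDiff ℝ 1 φ) (h_supp : HasCompactSupport φ) :
    ν (ball 0 1) ^ (1 / p) * eLpNorm' φ p μ ≤
      concentrationIntegral μ (finrank ℝ E) p * eLpNorm' (fderiv ℝ φ) p ν := by
  have h_ae : ∀ᵐ q ∂μ.prod (ν.restrict (ball 0 1)),
      ‖φ q.1‖ₑ ≤ ‖∫⁻ t in Ioi (0 : ℝ), ‖fderiv ℝ φ (q.1 + t • q.2)‖ₑ‖ₑ := by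
    have h_dir : ∀ᵐ z ∂ν.restrict (ball 0 1), z ≠ 0 ∧ z ∈ ball (0 : E) 1 :=
      (ae_restrict_of_ae (Measure.ae_ne ν 0)).and (ae_restrict_mem measurableSet_ball)
    filter_upwards [Measure.quasiMeasurePreserving_snd.ae h_dir] with q ⟨hq₀, hq₁⟩
    refine (enorm_le_mul_lintegral_enorm_fderiv_ray hφ h_supp q.1 hq₀).trans ?_
    have h_le : ‖q.2‖ₑ ≤ 1 := by
      rw [← ofReal_norm]
      exact ENNReal.ofReal_le_one.2 (mem_ball_zero_iff.1 hq₁).le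
    simpa using mul_le_of_le_one_right' h_le
  have h_fderiv : Continuous (fderiv ℝ φ) := hφ.continuous_fderiv one_ne_zero
  calc ν (ball 0 1) ^ (1 / p) * eLpNorm' φ p μ
      = eLpNorm' (fun q : E × E => φ q.1) p (μ.prod (ν.restrict (ball 0 1))) := by
        rw [eLpNorm'_comp_fst (one_pos.trans_le hp) hφ.continuous.aestronglyMeasurable,
          Measure.restrict_apply_univ]
    _ ≤ eLpNorm' (fun q : E × E => ∫⁻ t in Ioi (0 : ℝ), ‖fderiv ℝ φ (q.1 + t • q.2)‖ₑ) p
          (μ.prod (ν.restrict (ball 0 1))) := eLpNorm'_mono_enorm_ae (by positivity) h_ae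
    _ ≤ ∫⁻ t in Ioi (0 : ℝ), eLpNorm' (fun q : E × E => ‖fderiv ℝ φ (q.1 + t • q.2)‖ₑ) p
          (μ.prod (ν.restrict (ball 0 1))) :=
        eLpNorm'_lintegral_le_lintegral_eLpNorm' hp (Continuous.measurable (by fun_prop))
    _ ≤ concentrationIntegral μ (finrank ℝ E) p * eLpNorm' (fun x => ‖fderiv ℝ φ x‖ₑ) p ν :=
        setLIntegral_eLpNorm'_prod_unitBall_le (one_pos.trans_le hp)
          h_fderiv.enorm.measurable
    _ = concentrationIntegral μ (finrank ℝ E) p * eLpNorm' (fderiv ℝ φ) p ν := by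
        simp [eLpNorm']

theorem exists_eLpNorm'_le_mul_eLpNorm'_fderiv (ν : Measure E) [ν.IsAddHaarMeasure]
    [IsFiniteMeasure μ] {p α C : ℝ} (hp : 1 ≤ p) (hpd : p < finrank ℝ E)
    (hα : finrank ℝ E - p < α) (hμ : ∀ x r, 0 < r → μ (ball x r) ≤ ENNReal.ofReal (C * r ^ α)) :
    ∃ K : ℝ≥0, ∀ φ : E → F, ContDiff ℝ 1 φ → HasCompactSupport φ →
      eLpNorm' φ p μ ≤ K * eLpNorm' (fderiv ℝ φ) p ν := by
  have h_dim : 0 < finrank ℝ E := by exact_mod_cast (one_pos.trans_le hp).trans hpd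
  have : Nontrivial E := Module.nontrivial_of_finrank_pos h_dim
  set b := ν (ball 0 1) ^ (1 / p)
  have hb₀ : b ≠ 0 :=
    (ENNReal.rpow_pos (measure_ball_pos ν 0 one_pos) measure_ball_lt_top.ne).ne'
  have hb : b ≠ ∞ := ENNReal.rpow_ne_top_of_nonneg (by positivity) measure_ball_lt_top.ne
  have h_fin := concentrationIntegral_ne_top (one_pos.trans_le hp) hpd hα hμ
  refine ⟨(b⁻¹ * concentrationIntegral μ (finrank ℝ E) p).toNNReal, fun φ hφ h_supp => ?_⟩
  rw [ENNReal.coe_toNNReal (ENNReal.mul_ne_top (ENNReal.inv_ne_top.2 hb₀) h_fin), mul_assoc,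
    ← ENNReal.mul_le_iff_le_inv hb₀ hb]
  exact measure_ball_rpow_mul_eLpNorm'_le hp hφ h_supp

end Trace

lemma integral_norm_rpow_eq_toReal_eLpNorm'_rpow {X F : Type*} [MeasurableSpace X]
    [NormedAddCommGroup F] {μ : Measure X} {p : ℝ} (hp : 0 < p) {f : X → F}
    (hf : AEStronglyMeasurable f μ) :
    ∫ x, ‖f x‖ ^ p ∂μ = (eLpNorm' f p μ ^ p).toReal := by
  rw [← lintegral_rpow_enorm_eq_rpow_eLpNorm' hp, integral_eq_lintegral_of_nonneg_ae
    (.of_forall fun x => by positivity) (hf.norm.aemeasurable.pow_const p).aestronglyMeasurable]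
  simp only [← ENNReal.ofReal_rpow_of_nonneg (norm_nonneg _) hp.le, ofReal_norm]

lemma integral_norm_rpow_le_of_eLpNorm'_le {X Y F G : Type*} [MeasurableSpace X]
    [MeasurableSpace Y] [NormedAddCommGroup F] [NormedAddCommGroup G] {μ : Measure X}
    {ν : Measure Y} {p : ℝ} (hp : 0 < p) {f : X → F} {g : Y → G} {K : ℝ≥0}
    (hf : AEStronglyMeasurable f μ) (hg : AEStronglyMeasurable g ν)
    (hg_top : eLpNorm' g p ν ≠ ∞) (h : eLpNorm' f p μ ≤ K * eLpNorm' g p ν) :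
    ∫ x, ‖f x‖ ^ p ∂μ ≤ (K : ℝ) ^ p * ∫ y, ‖g y‖ ^ p ∂ν := by
  rw [integral_norm_rpow_eq_toReal_eLpNorm'_rpow hp hf,
    integral_norm_rpow_eq_toReal_eLpNorm'_rpow hp hg, ← NNReal.coe_rpow, ← ENNReal.coe_toReal,
    ← ENNReal.toReal_mul, ENNReal.coe_rpow_of_nonneg _ hp.le,
    ← ENNReal.mul_rpow_of_nonneg _ _ hp.le]
  have h_top : K * eLpNorm' g p ν ≠ ∞ := ENNReal.mul_ne_top ENNReal.coe_ne_top hg_top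
  gcongr
  exact ENNReal.rpow_ne_top_of_nonneg hp.le h_top

theorem stmt5_general {E F : Type*} [NormedAddCommGroup E] [NormedSpace ℝ E]
    [FiniteDimensional ℝ E] [MeasurableSpace E] [BorelSpace E] [NormedAddCommGroup F]
    [NormedSpace ℝ F] (ν : Measure E) [ν.IsAddHaarMeasure] (μ : Measure E) [IsFiniteMeasure μ]
    {p α Cμ : ℝ} (hp : 1 ≤ p) (hpd : p < finrank ℝ E) (hα : finrank ℝ E - p < α)
    (hdim : ∀ x r, 0 < r → μ (ball x r) ≤ ENNReal.ofReal (Cμ * r ^ α)) :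
    ∃ C : ℝ, 0 < C ∧ ∀ φ : E → F, ContDiff ℝ 1 φ → HasCompactSupport φ →
      ∫ x, ‖φ x‖ ^ p ∂μ ≤ C * ∫ x, ‖fderiv ℝ φ x‖ ^ p ∂ν := by
  obtain ⟨K, hK⟩ := exists_eLpNorm'_le_mul_eLpNorm'_fderiv (F := F) ν hp hpd hα hdim
  have hp₀ : 0 < p := one_pos.trans_le hp
  refine ⟨(K : ℝ) ^ p + 1, by positivity, fun φ hφ h_supp => ?_⟩
  have h_cont : Continuous (fderiv ℝ φ) := hφ.continuous_fderiv one_ne_zero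
  have h_memLp : MemLp (fderiv ℝ φ) (ENNReal.ofReal p) ν :=
    h_cont.memLp_of_hasCompactSupport (h_supp.fderiv ℝ)
  have h_top : eLpNorm' (fderiv ℝ φ) p ν ≠ ∞ := by
    simpa [eLpNorm_eq_eLpNorm' (ENNReal.ofReal_pos.2 hp₀).ne' ENNReal.ofReal_ne_top,
      ENNReal.toReal_ofReal hp₀.le] using h_memLp.eLpNorm_ne_top
  calc ∫ x, ‖φ x‖ ^ p ∂μ ≤ (K : ℝ) ^ p * ∫ x, ‖fderiv ℝ φ x‖ ^ p ∂ν :=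
        integral_norm_rpow_le_of_eLpNorm'_le hp₀ hφ.continuous.aestronglyMeasurable
          h_cont.aestronglyMeasurable h_top (hK φ hφ h_supp)
    _ ≤ ((K : ℝ) ^ p + 1) * ∫ x, ‖fderiv ℝ φ x‖ ^ p ∂ν := by
        gcongr
        exact le_add_of_nonneg_right zero_le_one

/-- If `μ` is a compactly supported `α`-dimensional positive measure on `ℝⁿ`
(`n ≥ 3`) with `α > n-2`, then `Ḣ¹(ℝⁿ)` embeds continuously into `L²(μ)`:
`∫ |φ|² dμ ≤ C ‖∇φ‖²_{L²(ℝⁿ)}` for all (smooth compactly supported, hence all) `φ ∈ Ḣ¹`. -/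
theorem stmt5 (n : ℕ) (hn : 3 ≤ n)
    (μ : Measure (EuclideanSpace ℝ (Fin n))) [IsFiniteMeasure μ]
    (hsupp : ∃ M : ℝ, 0 < M ∧ μ (closedBall (0 : EuclideanSpace ℝ (Fin n)) M)ᶜ = 0)
    (Cμ α : ℝ) (hCμ : 0 ≤ Cμ) (hα : (n : ℝ) - 2 < α)
    (hdim : ∀ (x : EuclideanSpace ℝ (Fin n)) (r : ℝ), 0 < r →
      μ (ball x r) ≤ ENNReal.ofReal (Cμ * r ^ α)) :
    ∃ C : ℝ, 0 < C ∧
      ∀ φ : EuclideanSpace ℝ (Fin n) → ℝ, ContDiff ℝ (⊤ : ℕ∞) φ → HasCompactSupport φ →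
        ∫ x, (φ x) ^ 2 ∂μ ≤ C * ∫ x, ‖fderiv ℝ φ x‖ ^ 2 := by
  have hn' : (2 : ℝ) < n := by exact_mod_cast hn
  obtain ⟨C, hC, h⟩ := stmt5_general (F := ℝ) volume μ one_le_two (by simpa using hn')
    (by simpa using hα) hdim
  exact ⟨C, hC, fun φ hφ hc => by simpa using h φ (hφ.of_le (by simp)) hc⟩
end

section
/- Let μ be a compactly supported positive measure on ℝⁿ, n ≥ 3, of dimension α > n-2. Then the inclusion map j : Ḣ¹(ℝⁿ) → L²(μ) is a compact operator. -/
open MeasureTheory Metric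

/-!
Let `d` be the dimension of the space. The fundamental theorem of calculus along segments, a
weighted Cauchy-Schwarz inequality and the growth bound `μ (B(x, r)) ≤ C r ^ α` give the trace
Poincaré inequality `∫ ∫_{B(x, r)} |f y - f x|² dy dμ(x) ≲ r ^ (α + 2) ‖∇f‖²`. Cover the support of
`μ` by finitely many balls of radius `ρ`. Comparing `f` with its averages over these balls bounds
`∫ |f|² dμ` by a multiple of the sum of the squared averages plus `O(ρ ^ (α + 2 - d)) ‖∇f‖²`, and
the last factor tends to zero with `ρ` because `α > d - 2`. For `d ≥ 3` the averages are controlled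
by `‖∇f‖` through the Gagliardo-Nirenberg-Sobolev inequality, so a diagonal subsequence makes all
of them converge, at all the scales `ρ`, and is then Cauchy in `L²(μ)`.
-/

open Filter Module
open scoped ENNReal Topology

theorem ennreal_add_sq_le (a b : ℝ≥0∞) : (a + b) ^ 2 ≤ 2 * (a ^ 2 + b ^ 2) := by
  simpa [show (2 : ℝ) - 1 = 1 by norm_num] using
    ENNReal.rpow_add_le_mul_rpow_add_rpow a b one_le_two

theorem lintegral_mul_sq_le {X : Type*} [MeasurableSpace X] (P : Measure X) {f g : X → ℝ≥0∞}
    (hf : AEMeasurable f P) (hg : AEMeasurable g P) :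
    (∫⁻ x, f x * g x ∂P) ^ 2 ≤ (∫⁻ x, f x ^ 2 ∂P) * ∫⁻ x, g x ^ 2 ∂P := by
  have sq_sqrt (c : ℝ≥0∞) : (c ^ (1 / 2 : ℝ)) ^ 2 = c := by
    rw [← ENNReal.rpow_mul_natCast]; norm_num
  have holder := ENNReal.lintegral_mul_le_Lp_mul_Lq P Real.HolderConjugate.two_two hf hg
  simpa [mul_pow, sq_sqrt, ← one_div] using pow_le_pow_left₀ zero_le holder 2

theorem lintegral_sq_le {X : Type*} [MeasurableSpace X] (P : Measure X) [IsProbabilityMeasure P]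
    {f : X → ℝ≥0∞} (hf : AEMeasurable f P) : (∫⁻ x, f x ∂P) ^ 2 ≤ ∫⁻ x, f x ^ 2 ∂P := by
  simpa using lintegral_mul_sq_le P aemeasurable_const hf (f := fun _ => 1)

theorem lintegral_Ioc_rpow {R s : ℝ} (hR : 0 ≤ R) (hs : -1 < s) :
    ∫⁻ t in Set.Ioc 0 R, ENNReal.ofReal (t ^ s) = ENNReal.ofReal (R ^ (s + 1) / (s + 1)) := by
  have integrable : IntegrableOn (fun t : ℝ => t ^ s) (Set.Ioc 0 R) :=
    (intervalIntegrable_iff_integrableOn_Ioc_of_le hR).1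
      (intervalIntegral.intervalIntegrable_rpow' hs)
  rw [← ofReal_integral_eq_lintegral_ofReal integrable
      (ae_restrict_of_forall_mem measurableSet_Ioc fun t ht => Real.rpow_nonneg ht.1.le s),
    ← intervalIntegral.integral_of_le hR, integral_rpow (Or.inl hs),
    Real.zero_rpow (by linarith), sub_zero]

theorem sq_lintegral_Ioc_le {a : ℝ} (ha : a < 1) {g : ℝ → ℝ≥0∞} (hg : Measurable g) :
    (∫⁻ t in Set.Ioc (0 : ℝ) 1, g t) ^ 2 ≤
      ENNReal.ofReal (1 - a)⁻¹ * ∫⁻ t in Set.Ioc (0 : ℝ) 1, ENNReal.ofReal (t ^ a) * g t ^ 2 := by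
  have sq_rpow {t : ℝ} (ht : 0 < t) (b : ℝ) :
      ENNReal.ofReal (t ^ (b / 2)) ^ 2 = ENNReal.ofReal (t ^ b) := by
    rw [← ENNReal.ofReal_pow (Real.rpow_nonneg ht.le _), ← Real.rpow_mul_natCast ht.le]
    norm_num
  have split {t : ℝ} (ht : 0 < t) :
      g t = ENNReal.ofReal (t ^ (-a / 2)) * (ENNReal.ofReal (t ^ (a / 2)) * g t) := by
    rw [← mul_assoc, ← ENNReal.ofReal_mul (Real.rpow_nonneg ht.le _), ← Real.rpow_add ht]
    simp [neg_div]
  calc (∫⁻ t in Set.Ioc (0 : ℝ) 1, g t) ^ 2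
      = (∫⁻ t in Set.Ioc (0 : ℝ) 1,
          ENNReal.ofReal (t ^ (-a / 2)) * (ENNReal.ofReal (t ^ (a / 2)) * g t)) ^ 2 := by
        rw [setLIntegral_congr_fun measurableSet_Ioc fun t ht => split ht.1]
    _ ≤ (∫⁻ t in Set.Ioc (0 : ℝ) 1, ENNReal.ofReal (t ^ (-a / 2)) ^ 2) *
          ∫⁻ t in Set.Ioc (0 : ℝ) 1, (ENNReal.ofReal (t ^ (a / 2)) * g t) ^ 2 :=
        lintegral_mul_sq_le _ (by fun_prop) (by fun_prop)
    _ = (∫⁻ t in Set.Ioc (0 : ℝ) 1, ENNReal.ofReal (t ^ (-a))) *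
          ∫⁻ t in Set.Ioc (0 : ℝ) 1, ENNReal.ofReal (t ^ a) * g t ^ 2 := by
        congr 1
        · exact setLIntegral_congr_fun measurableSet_Ioc fun t ht => sq_rpow ht.1 _
        · refine setLIntegral_congr_fun measurableSet_Ioc fun t ht => ?_
          simp only [mul_pow, sq_rpow ht.1]
    _ = _ := by
        rw [lintegral_Ioc_rpow zero_le_one (by linarith), Real.one_rpow, neg_add_eq_sub, one_div]

theorem exists_strictMono_forall_tendsto {ι X : Type*} [Countable ι] [PseudoMetricSpace X]
    [ProperSpace X] {x : ℕ → ι → X}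
    (hx : ∀ i, Bornology.IsBounded (Set.range fun k => x k i)) :
    ∃ g : ℕ → ℕ, StrictMono g ∧ ∀ i, ∃ l, Tendsto (fun k => x (g k) i) atTop (𝓝 l) := by
  have compact := isCompact_univ_pi fun i => (hx i).isCompact_closure
  obtain ⟨l, -, g, hg, lim⟩ := compact.tendsto_subseq fun k i _ =>
    subset_closure (Set.mem_range_self k)
  exact ⟨g, hg, fun i => ⟨l i, tendsto_pi_nhds.1 lim i⟩⟩

theorem tendsto_sum_enorm_sub_sq {ι G : Type*} [NormedAddCommGroup G] {s : Finset ι} {a : ℕ → ι → G}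
    (ha : ∀ i ∈ s, ∃ l, Tendsto (a · i) atTop (𝓝 l)) :
    Tendsto (fun p : ℕ × ℕ => ∑ i ∈ s, ‖a p.1 i - a p.2 i‖ₑ ^ 2) atTop (𝓝 0) := by
  rw [← Finset.sum_const_zero (s := s), ← prod_atTop_atTop_eq]
  refine tendsto_finsetSum s fun i hi => ?_
  obtain ⟨l, hl⟩ := ha i hi
  have difference := (hl.comp (tendsto_fst (g := atTop))).sub
    (hl.comp (tendsto_snd (f := atTop)))
  simpa using ENNReal.Tendsto.pow (n := 2) difference.enorm

section
variable {X : Type*} [PseudoMetricSpace X] [MeasurableSpace X] {μ : Measure X} {C α : ℝ}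

/-- Ahlfors upper regularity: `μ` is of dimension at least `α`, in the sense that a ball of radius
`r` has mass at most `C r ^ α`. This is the dimension condition on `μ` in the trace theorem. -/
def IsUpperRegular (μ : Measure X) (C α : ℝ) : Prop :=
  ∀ (x : X) (r : ℝ), 0 < r → μ (ball x r) ≤ ENNReal.ofReal (C * r ^ α)

theorem IsUpperRegular.isFiniteMeasure (hμ : IsUpperRegular μ C α) {K : Set X}
    (hK : IsCompact K) (hμK : μ Kᶜ = 0) : IsFiniteMeasure μ := by
  have : IsLocallyFiniteMeasure μ :=
    ⟨fun x => ⟨ball x 1, ball_mem_nhds x one_pos, (hμ x 1 one_pos).trans_lt ENNReal.ofReal_lt_top⟩⟩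
  refine ⟨(measure_univ_le_add_compl K).trans_lt ?_⟩
  rw [hμK, add_zero]
  exact hK.measure_lt_top

theorem IsUpperRegular.lintegral_setLIntegral_ball_le [SecondCountableTopology X]
    [OpensMeasurableSpace X] [SFinite μ] (hμ : IsUpperRegular μ C α) (ν : Measure X) [SFinite ν]
    {h : X → ℝ≥0∞} (hh : Measurable h) {r : ℝ} (hr : 0 < r) :
    ∫⁻ x, ∫⁻ y in ball x r, h y ∂ν ∂μ ≤ ENNReal.ofReal (C * r ^ α) * ∫⁻ y, h y ∂ν := by
  let near : Set (X × X) := {p | dist p.2 p.1 < r}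
  have near_meas : MeasurableSet near :=
    (isOpen_lt (by fun_prop) continuous_const).measurableSet
  calc ∫⁻ x, ∫⁻ y in ball x r, h y ∂ν ∂μ
      = ∫⁻ x, ∫⁻ y, near.indicator (fun p => h p.2) (x, y) ∂ν ∂μ :=
        lintegral_congr fun x => (lintegral_indicator measurableSet_ball h).symm
    _ = ∫⁻ y, ∫⁻ x, near.indicator (fun p => h p.2) (x, y) ∂μ ∂ν :=
        lintegral_lintegral_swap ((hh.comp measurable_snd).indicator near_meas).aemeasurable
    _ = ∫⁻ y, h y * μ (ball y r) ∂ν := by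
        refine lintegral_congr fun y => ?_
        rw [← lintegral_indicator_const measurableSet_ball]
        simp [near, Set.indicator, dist_comm]
    _ ≤ ∫⁻ y, h y * ENNReal.ofReal (C * r ^ α) ∂ν := by
        gcongr with y
        exact hμ y r hr
    _ = _ := by rw [lintegral_mul_const' _ _ ENNReal.ofReal_ne_top, mul_comm]

end

section
variable {E F : Type*} [NormedAddCommGroup E] [NormedSpace ℝ E] [NormedAddCommGroup F]
  [NormedSpace ℝ F]

theorem enorm_add_sub_le_lintegral_fderiv [CompleteSpace F] {f : E → F} (hf : ContDiff ℝ 1 f)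
    (x z : E) :
    ‖f (x + z) - f x‖ₑ ≤ ‖z‖ₑ * ∫⁻ t in Set.Ioc (0 : ℝ) 1, ‖fderiv ℝ f (x + t • z)‖ₑ := by
  have cont : Continuous fun t : ℝ => fderiv ℝ f (x + t • z) :=
    (hf.continuous_fderiv one_ne_zero).comp (by fun_prop)
  have deriv (t : ℝ) : HasDerivAt (fun t : ℝ => f (x + t • z)) (fderiv ℝ f (x + t • z) z) t :=
    ((hf.differentiable one_ne_zero _).hasFDerivAt).comp_hasDerivAt t
      (by simpa using ((hasDerivAt_id t).smul_const z).const_add x)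
  have ftc : ∫ t in Set.Ioc (0 : ℝ) 1, fderiv ℝ f (x + t • z) z = f (x + z) - f x := by
    rw [← intervalIntegral.integral_of_le zero_le_one,
      intervalIntegral.integral_eq_sub_of_hasDerivAt (fun t _ => deriv t)
        ((cont.clm_apply continuous_const).intervalIntegrable 0 1)]
    simp
  calc ‖f (x + z) - f x‖ₑ ≤ ∫⁻ t in Set.Ioc (0 : ℝ) 1, ‖fderiv ℝ f (x + t • z) z‖ₑ :=
        ftc ▸ enorm_integral_le_lintegral_enorm _
    _ ≤ ∫⁻ t in Set.Ioc (0 : ℝ) 1, ‖z‖ₑ * ‖fderiv ℝ f (x + t • z)‖ₑ := by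
        refine lintegral_mono fun t => ?_
        rw [mul_comm]
        exact ContinuousLinearMap.le_opENorm _ _
    _ = _ := lintegral_const_mul _ cont.enorm.measurable

theorem enorm_add_sub_sq_le_lintegral_fderiv [CompleteSpace F] {f : E → F} (hf : ContDiff ℝ 1 f)
    (x z : E) {a : ℝ} (ha : a < 1) :
    ‖f (x + z) - f x‖ₑ ^ 2 ≤ ‖z‖ₑ ^ 2 * (ENNReal.ofReal (1 - a)⁻¹ *
      ∫⁻ t in Set.Ioc (0 : ℝ) 1, ENNReal.ofReal (t ^ a) * ‖fderiv ℝ f (x + t • z)‖ₑ ^ 2) := by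
  have cont : Continuous fun t : ℝ => fderiv ℝ f (x + t • z) :=
    (hf.continuous_fderiv one_ne_zero).comp (by fun_prop)
  refine (pow_le_pow_left₀ zero_le (enorm_add_sub_le_lintegral_fderiv hf x z) 2).trans ?_
  rw [mul_pow]
  gcongr
  exact sq_lintegral_Ioc_le ha cont.enorm.measurable

theorem enorm_sq_le_enorm_integral_sq_add {X : Type*} [MeasurableSpace X] (P : Measure X)
    [IsProbabilityMeasure P] [CompleteSpace F] {f : X → F} (hf : Integrable f P) (c : F) :
    ‖c‖ₑ ^ 2 ≤ 2 * (‖∫ y, f y ∂P‖ₑ ^ 2 + ∫⁻ y, ‖f y - c‖ₑ ^ 2 ∂P) := by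
  have deviation : ∫ y, f y ∂P - c = ∫ y, (f y - c) ∂P := by
    simp [integral_sub hf (integrable_const c)]
  calc ‖c‖ₑ ^ 2 = ‖∫ y, f y ∂P - (∫ y, f y ∂P - c)‖ₑ ^ 2 := by rw [sub_sub_cancel]
    _ ≤ (‖∫ y, f y ∂P‖ₑ + ∫⁻ y, ‖f y - c‖ₑ ∂P) ^ 2 := by
        gcongr
        refine enorm_sub_le.trans ?_
        gcongr
        exact deviation ▸ enorm_integral_le_lintegral_enorm _
    _ ≤ 2 * (‖∫ y, f y ∂P‖ₑ ^ 2 + (∫⁻ y, ‖f y - c‖ₑ ∂P) ^ 2) := ennreal_add_sq_le _ _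
    _ ≤ _ := by
        gcongr
        exact lintegral_sq_le P (hf.aestronglyMeasurable.sub aestronglyMeasurable_const).enorm

variable [MeasurableSpace E]

/-- The squared homogeneous Sobolev seminorm `‖f‖²` of `Ḣ¹`, with respect to the measure `ν`. It is
valued in `ℝ≥0∞`, so that infinite energy is not confused with zero energy. -/
noncomputable def dirichletEnergy (ν : Measure E) (f : E → F) : ℝ≥0∞ :=
  ∫⁻ x, ‖fderiv ℝ f x‖ₑ ^ 2 ∂ν

theorem eLpNorm_fderiv_two_sq (ν : Measure E) (f : E → F) :
    eLpNorm (fderiv ℝ f) 2 ν ^ 2 = dirichletEnergy ν f := by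
  rw [dirichletEnergy, ← Nat.cast_two]
  simpa using eLpNorm_nnreal_pow_eq_lintegral (p := 2) (f := fderiv ℝ f) (μ := ν) two_ne_zero

variable [BorelSpace E]

theorem dirichletEnergy_sub_le (ν : Measure E) {f g : E → F} (hf : ContDiff ℝ 1 f)
    (hg : ContDiff ℝ 1 g) :
    dirichletEnergy ν (f - g) ≤ 2 * (dirichletEnergy ν f + dirichletEnergy ν g) := by
  have pointwise (x : E) :
      ‖fderiv ℝ (f - g) x‖ₑ ^ 2 ≤ 2 * (‖fderiv ℝ f x‖ₑ ^ 2 + ‖fderiv ℝ g x‖ₑ ^ 2) := by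
    rw [fderiv_sub (hf.differentiable one_ne_zero x) (hg.differentiable one_ne_zero x)]
    exact (pow_le_pow_left₀ zero_le enorm_sub_le 2).trans (ennreal_add_sq_le _ _)
  have measurable : Measurable fun x => ‖fderiv ℝ f x‖ₑ ^ 2 :=
    (hf.continuous_fderiv one_ne_zero).enorm.measurable.pow_const 2
  refine (lintegral_mono pointwise).trans_eq ?_
  rw [lintegral_const_mul' _ _ ENNReal.ofNat_ne_top, lintegral_add_left measurable]
  rfl

theorem dirichletEnergy_eq_ofReal_integral (ν : Measure E) [IsFiniteMeasureOnCompacts ν]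
    {f : E → F} (hf : ContDiff ℝ 1 f) (hfc : HasCompactSupport f) :
    dirichletEnergy ν f = ENNReal.ofReal (∫ x, ‖fderiv ℝ f x‖ ^ 2 ∂ν) := by
  have integrable : Integrable (fun x => ‖fderiv ℝ f x‖ ^ 2) ν :=
    ((hf.continuous_fderiv one_ne_zero).memLp_of_hasCompactSupport
      (hfc.fderiv (𝕜 := ℝ))).integrable_norm_pow two_ne_zero
  rw [ofReal_integral_eq_lintegral_ofReal integrable (Eventually.of_forall fun x => sq_nonneg _)]
  simp only [dirichletEnergy, ENNReal.ofReal_pow (norm_nonneg _), ofReal_norm]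

variable [FiniteDimensional ℝ E] (ν : Measure E) [ν.IsAddHaarMeasure] {μ : Measure E} {C α : ℝ}

theorem setLIntegral_ball_zero_comp_add_smul {h : E → ℝ≥0∞} (hh : Measurable h) (x : E) (r : ℝ)
    {t : ℝ} (ht : 0 < t) :
    ∫⁻ z in ball 0 r, h (x + t • z) ∂ν =
      ENNReal.ofReal (t ^ finrank ℝ E)⁻¹ * ∫⁻ y in ball x (t * r), h y ∂ν := by
  have map_eq : ν.map (fun z : E => x + t • z) = ENNReal.ofReal (t ^ finrank ℝ E)⁻¹ • ν := by
    rw [← Function.comp_def (x + ·), ← Measure.map_map (measurable_const_add x)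
      (measurable_const_smul t), Measure.map_addHaar_smul ν ht.ne', Measure.map_smul,
      map_add_left_eq_self, abs_of_pos (by positivity)]
  have preimage_ball : (fun z => x + t • z) ⁻¹' ball x (t * r) = ball 0 r := by
    ext z
    simp [norm_smul, abs_of_pos ht, ht]
  rw [← smul_eq_mul, ← lintegral_smul_measure, ← Measure.restrict_smul, ← map_eq,
    setLIntegral_map measurableSet_ball hh (by fun_prop), preimage_ball]

theorem IsUpperRegular.lintegral_setLIntegral_ball_comp_add_smul_le [SFinite μ]
    (hμ : IsUpperRegular μ C α) {h : E → ℝ≥0∞} (hh : Measurable h)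
    {r t : ℝ} (hr : 0 < r) (ht : 0 < t) :
    ∫⁻ x, ∫⁻ z in ball 0 r, h (x + t • z) ∂ν ∂μ ≤
      ENNReal.ofReal (C * r ^ α * t ^ (α - finrank ℝ E)) * ∫⁻ y, h y ∂ν := by
  simp only [setLIntegral_ball_zero_comp_add_smul ν hh _ r ht]
  rw [lintegral_const_mul' _ _ ENNReal.ofReal_ne_top]
  refine (mul_le_mul_right (hμ.lintegral_setLIntegral_ball_le ν hh (mul_pos ht hr)) _).trans_eq ?_
  rw [← mul_assoc, ← ENNReal.ofReal_mul (by positivity), Real.mul_rpow ht.le hr.le,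
    Real.rpow_sub ht, Real.rpow_natCast]
  congr 2
  ring

theorem IsUpperRegular.lintegral_lintegral_lintegral_rpow_mul_comp_add_smul_le [SFinite μ]
    (hμ : IsUpperRegular μ C α) {a : ℝ} (ha : -1 < a + α - finrank ℝ E)
    {h : E → ℝ≥0∞} (hh : Measurable h) {r : ℝ} (hr : 0 < r) :
    ∫⁻ x, ∫⁻ z in ball 0 r, (∫⁻ t in Set.Ioc (0 : ℝ) 1,
        ENNReal.ofReal (t ^ a) * h (x + t • z)) ∂ν ∂μ ≤
      ENNReal.ofReal (C * r ^ α / (a + α - finrank ℝ E + 1)) * ∫⁻ y, h y ∂ν := by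
  have measurable : Measurable fun p : (E × E) × ℝ =>
      ENNReal.ofReal (p.2 ^ a) * h (p.1.1 + p.2 • p.1.2) := by
    have _ray : Measurable fun p : (E × E) × ℝ => h (p.1.1 + p.2 • p.1.2) :=
      hh.comp (by fun_prop)
    fun_prop
  calc ∫⁻ x, ∫⁻ z in ball 0 r, (∫⁻ t in Set.Ioc (0 : ℝ) 1,
        ENNReal.ofReal (t ^ a) * h (x + t • z)) ∂ν ∂μ
      = ∫⁻ t in Set.Ioc (0 : ℝ) 1, ENNReal.ofReal (t ^ a) *
          ∫⁻ x, ∫⁻ z in ball 0 r, h (x + t • z) ∂ν ∂μ := by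
        rw [lintegral_lintegral (ν := ν.restrict (ball 0 r))
            (f := fun x z => ∫⁻ t in Set.Ioc (0 : ℝ) 1, ENNReal.ofReal (t ^ a) * h (x + t • z))
            measurable.lintegral_prod_right'.aemeasurable,
          lintegral_lintegral_swap measurable.aemeasurable]
        refine lintegral_congr fun t => ?_
        have ray_measurable : Measurable fun p : E × E => h (p.1 + t • p.2) :=
          hh.comp (by fun_prop)
        rw [lintegral_const_mul' _ _ ENNReal.ofReal_ne_top,
          lintegral_prod _ ray_measurable.aemeasurable]
    _ ≤ ∫⁻ t in Set.Ioc (0 : ℝ) 1, ENNReal.ofReal (t ^ (a + α - finrank ℝ E)) *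
          (ENNReal.ofReal (C * r ^ α) * ∫⁻ y, h y ∂ν) := by
        refine setLIntegral_mono' measurableSet_Ioc fun t ht => ?_
        refine (mul_le_mul_right
          (hμ.lintegral_setLIntegral_ball_comp_add_smul_le ν hh hr ht.1) _).trans_eq ?_
        rw [add_sub_assoc, Real.rpow_add ht.1, ENNReal.ofReal_mul (Real.rpow_nonneg ht.1.le _),
          ENNReal.ofReal_mul' (Real.rpow_nonneg ht.1.le _)]
        ring
    _ = _ := by
        rw [lintegral_mul_const _ (by fun_prop), lintegral_Ioc_rpow zero_le_one ha, Real.one_rpow,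
          ← mul_assoc, ← ENNReal.ofReal_mul (one_div_nonneg.2 (by linarith)), one_div_mul_eq_div]

theorem IsUpperRegular.lintegral_setLIntegral_ball_enorm_sub_sq_le [CompleteSpace F] [SFinite μ]
    (hμ : IsUpperRegular μ C α) (hα : finrank ℝ E - 2 < α) {f : E → F} (hf : ContDiff ℝ 1 f)
    {r : ℝ} (hr : 0 < r) :
    ∫⁻ x, ∫⁻ y in ball x r, ‖f y - f x‖ₑ ^ 2 ∂ν ∂μ ≤
      ENNReal.ofReal (C * r ^ (α + 2) / ((α + 2 - finrank ℝ E) / 2) ^ 2) *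
        dirichletEnergy ν f := by
  -- The weight `t ^ (1 - b)` needs `0 < b` for Cauchy-Schwarz and `b < α + 2 - finrank ℝ E` for the
  -- rescaled balls; `b` is the midpoint.
  have hb : 0 < (α + 2 - finrank ℝ E) / 2 := by linarith
  set b : ℝ := (α + 2 - finrank ℝ E) / 2 with b_def
  have measurable : Measurable fun y => ‖fderiv ℝ f y‖ₑ ^ 2 :=
    (hf.continuous_fderiv one_ne_zero).enorm.measurable.pow_const 2
  have recenter (x : E) : ∫⁻ y in ball x r, ‖f y - f x‖ₑ ^ 2 ∂ν =
      ∫⁻ z in ball 0 r, ‖f (x + z) - f x‖ₑ ^ 2 ∂ν := by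
    simpa using (setLIntegral_ball_zero_comp_add_smul ν
      ((hf.continuous.sub continuous_const).enorm.measurable.pow_const 2) x r one_pos).symm
  have pointwise (x z : E) (hz : z ∈ ball 0 r) : ‖f (x + z) - f x‖ₑ ^ 2 ≤
      ENNReal.ofReal (r ^ 2 / b) * ∫⁻ t in Set.Ioc (0 : ℝ) 1,
        ENNReal.ofReal (t ^ (1 - b)) * ‖fderiv ℝ f (x + t • z)‖ₑ ^ 2 := by
    refine (enorm_add_sub_sq_le_lintegral_fderiv hf x z (sub_lt_self 1 hb)).trans ?_
    rw [← mul_assoc, sub_sub_cancel, div_eq_mul_inv, ENNReal.ofReal_mul (sq_nonneg r),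
      ENNReal.ofReal_pow hr.le, ← ofReal_norm]
    gcongr
    exact (mem_ball_zero_iff.1 hz).le
  calc ∫⁻ x, ∫⁻ y in ball x r, ‖f y - f x‖ₑ ^ 2 ∂ν ∂μ
      ≤ ∫⁻ x, ∫⁻ z in ball 0 r, ENNReal.ofReal (r ^ 2 / b) * (∫⁻ t in Set.Ioc (0 : ℝ) 1,
          ENNReal.ofReal (t ^ (1 - b)) * ‖fderiv ℝ f (x + t • z)‖ₑ ^ 2) ∂ν ∂μ := by
        simp only [recenter]
        exact lintegral_mono fun x => setLIntegral_mono' measurableSet_ball (pointwise x)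
    _ = ENNReal.ofReal (r ^ 2 / b) * ∫⁻ x, ∫⁻ z in ball 0 r, (∫⁻ t in Set.Ioc (0 : ℝ) 1,
          ENNReal.ofReal (t ^ (1 - b)) * ‖fderiv ℝ f (x + t • z)‖ₑ ^ 2) ∂ν ∂μ := by
        simp only [lintegral_const_mul' _ _ ENNReal.ofReal_ne_top]
    _ ≤ ENNReal.ofReal (r ^ 2 / b) * (ENNReal.ofReal
          (C * r ^ α / (1 - b + α - finrank ℝ E + 1)) * dirichletEnergy ν f) := by
        gcongr
        exact hμ.lintegral_lintegral_lintegral_rpow_mul_comp_add_smul_le ν (by linarith)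
          measurable hr
    _ = _ := by
        rw [← mul_assoc, ← ENNReal.ofReal_mul (by positivity), Real.rpow_add hr, Real.rpow_two,
          show 1 - b + α - finrank ℝ E + 1 = b by rw [b_def]; ring]
        congr 2
        field_simp

theorem enorm_sq_le_enorm_average_ball_sq_add [CompleteSpace F] {f : E → F}
    (hf : Continuous f) {u x : E} {ρ : ℝ} (hx : x ∈ ball u ρ) :
    ‖f x‖ₑ ^ 2 ≤ 2 * (‖⨍ y in ball u ρ, f y ∂ν‖ₑ ^ 2 +
      (ν (ball 0 ρ))⁻¹ * ∫⁻ y in ball x (2 * ρ), ‖f y - f x‖ₑ ^ 2 ∂ν) := by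
  have ρ_pos : 0 < ρ := dist_nonneg.trans_lt hx
  have : NeZero (ν.restrict (ball u ρ)) :=
    ⟨Measure.restrict_eq_zero.not.2 (measure_ball_pos ν u ρ_pos).ne'⟩
  have : IsFiniteMeasure (ν.restrict (ball u ρ)) :=
    isFiniteMeasure_restrict.2 measure_ball_lt_top.ne
  have integrable : IntegrableOn f (ball u ρ) ν :=
    (hf.locallyIntegrable.integrableOn_isCompact (isCompact_closedBall u ρ)).mono_set
      ball_subset_closedBall
  refine (enorm_sq_le_enorm_integral_sq_add _ integrable.to_average (f x)).trans ?_
  rw [← average_eq', lintegral_smul_measure, Measure.restrict_apply_univ,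
    Measure.addHaar_ball_center, smul_eq_mul]
  gcongr
  exact ball_subset_ball' (by rw [mem_ball'] at hx; linarith)

theorem IsUpperRegular.lintegral_enorm_sq_le [CompleteSpace F] [SFinite μ]
    (hμ : IsUpperRegular μ C α) (hα : finrank ℝ E - 2 < α) {ρ : ℝ} (hρ : 0 < ρ) {s : Finset E}
    (hs : ∀ᵐ x ∂μ, x ∈ ⋃ u ∈ s, ball u ρ) {f : E → F} (hf : ContDiff ℝ 1 f) :
    ∫⁻ x, ‖f x‖ₑ ^ 2 ∂μ ≤ 2 * (μ Set.univ * ∑ u ∈ s, ‖⨍ y in ball u ρ, f y ∂ν‖ₑ ^ 2 +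
      (ν (ball 0 ρ))⁻¹ *
        ENNReal.ofReal (C * (2 * ρ) ^ (α + 2) / ((α + 2 - finrank ℝ E) / 2) ^ 2) *
          dirichletEnergy ν f) := by
  have pointwise : ∀ᵐ x ∂μ, ‖f x‖ₑ ^ 2 ≤ 2 * (∑ u ∈ s, ‖⨍ y in ball u ρ, f y ∂ν‖ₑ ^ 2 +
      (ν (ball 0 ρ))⁻¹ * ∫⁻ y in ball x (2 * ρ), ‖f y - f x‖ₑ ^ 2 ∂ν) := by
    filter_upwards [hs] with x hx
    obtain ⟨u, hu, hxu⟩ := Set.mem_iUnion₂.1 hx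
    refine (enorm_sq_le_enorm_average_ball_sq_add ν hf.continuous hxu).trans ?_
    gcongr
    exact Finset.single_le_sum_of_canonicallyOrdered
      (f := fun u => ‖⨍ y in ball u ρ, f y ∂ν‖ₑ ^ 2) hu
  refine (lintegral_mono_ae pointwise).trans ?_
  rw [lintegral_const_mul' _ _ ENNReal.ofNat_ne_top, lintegral_add_left measurable_const,
    lintegral_const, lintegral_const_mul' _ _ (ENNReal.inv_ne_top.2 (measure_ball_pos ν 0 hρ).ne'),
    mul_comm (μ _), mul_assoc (ν _)⁻¹]
  gcongr
  exact hμ.lintegral_setLIntegral_ball_enorm_sub_sq_le ν hα hf (mul_pos two_pos hρ)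

theorem tendsto_inv_measure_ball_mul_ofReal_rpow (c : ℝ) {β : ℝ} (hβ : finrank ℝ E < β) :
    Tendsto (fun ρ => (ν (ball 0 ρ))⁻¹ * ENNReal.ofReal (c * ρ ^ β)) (𝓝[>] 0) (𝓝 0) := by
  have rescale {ρ : ℝ} (hρ : 0 < ρ) : (ν (ball 0 ρ))⁻¹ * ENNReal.ofReal (c * ρ ^ β) =
      (ν (ball 0 1))⁻¹ * ENNReal.ofReal (c * ρ ^ (β - finrank ℝ E)) := by
    rw [Measure.addHaar_ball_of_pos ν 0 hρ, ENNReal.mul_inv (by left; positivity) (by simp),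
      ← ENNReal.ofReal_inv_of_pos (by positivity), mul_comm (ENNReal.ofReal _), mul_assoc,
      ← ENNReal.ofReal_mul (by positivity), Real.rpow_sub hρ, Real.rpow_natCast]
    congr 2
    ring
  have real_limit : Tendsto (fun ρ : ℝ => c * ρ ^ (β - finrank ℝ E)) (𝓝[>] 0) (𝓝 0) := by
    have cont := (Real.continuousAt_rpow_const 0 (β - finrank ℝ E)
      (Or.inr (sub_nonneg.2 hβ.le))).tendsto.const_mul c
    rw [Real.zero_rpow (sub_pos.2 hβ).ne', mul_zero] at cont
    exact cont.mono_left nhdsWithin_le_nhds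
  have limit := ENNReal.Tendsto.const_mul (a := (ν (ball 0 1))⁻¹)
    (ENNReal.tendsto_ofReal real_limit)
    (Or.inr (ENNReal.inv_ne_top.2 (measure_ball_pos ν 0 one_pos).ne'))
  rw [ENNReal.ofReal_zero, mul_zero] at limit
  exact limit.congr' (eventually_mem_nhdsWithin.mono fun ρ hρ => (rescale hρ).symm)

theorem IsUpperRegular.exists_forall_lintegral_enorm_sq_le [CompleteSpace F]
    (hμ : IsUpperRegular μ C α) (hα : finrank ℝ E - 2 < α) {K : Set E}
    (hK : IsCompact K) (hμK : μ Kᶜ = 0) {ε : ℝ≥0∞} (hε : ε ≠ 0) :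
    ∃ (ρ : ℝ) (s : Finset E), ∀ f : E → F, ContDiff ℝ 1 f → ∫⁻ x, ‖f x‖ₑ ^ 2 ∂μ ≤
      2 * μ Set.univ * ∑ u ∈ s, ‖⨍ y in ball u ρ, f y ∂ν‖ₑ ^ 2 + ε * dirichletEnergy ν f := by
  have : IsFiniteMeasure μ := hμ.isFiniteMeasure hK hμK
  have limit := tendsto_inv_measure_ball_mul_ofReal_rpow ν
    (C * 2 ^ (α + 2) / ((α + 2 - finrank ℝ E) / 2) ^ 2) (β := α + 2) (by linarith)
  obtain ⟨ρ, hρε, hρ⟩ := ((limit.eventually_le_const (ENNReal.half_pos hε)).and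
    eventually_mem_nhdsWithin).exists
  obtain ⟨s, -, hs⟩ := hK.elim_nhds_subcover (ball · ρ) fun x _ => ball_mem_nhds x hρ
  have cover : ∀ᵐ x ∂μ, x ∈ ⋃ u ∈ s, ball u ρ :=
    measure_mono_null (Set.compl_subset_compl.2 hs) hμK
  refine ⟨ρ, s, fun f hf => (hμ.lintegral_enorm_sq_le ν hα hρ cover hf).trans ?_⟩
  rw [Real.mul_rpow two_pos.le hρ.le, ← mul_assoc C, mul_div_right_comm, mul_add, ← mul_assoc 2,
    ← mul_assoc 2]
  gcongr
  exact (mul_le_mul_right hρε 2).trans_eq (ENNReal.mul_div_cancel two_ne_zero ENNReal.ofNat_ne_top)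

variable (F) in
theorem exists_forall_enorm_setAverage_sq_le [FiniteDimensional ℝ F] (hE : 2 < finrank ℝ E)
    {s : Set E} (hs : ν s ≠ ∞) :
    ∃ A : ℝ≥0∞, A ≠ ∞ ∧ ∀ f : E → F, ContDiff ℝ 1 f → HasCompactSupport f →
      ‖⨍ y in s, f y ∂ν‖ₑ ^ 2 ≤ A * dirichletEnergy ν f := by
  have dim_inv_pos : 0 < (finrank ℝ E : ℝ)⁻¹ := by positivity
  have dim_inv_lt : (finrank ℝ E : ℝ)⁻¹ < 2⁻¹ := inv_strictAnti₀ two_pos (by exact_mod_cast hE)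
  obtain ⟨q, hq⟩ : ∃ q : NNReal, (q : ℝ)⁻¹ = 2⁻¹ - (finrank ℝ E : ℝ)⁻¹ :=
    ⟨(2⁻¹ - (finrank ℝ E : ℝ)⁻¹).toNNReal⁻¹, by simp [dim_inv_lt.le]⟩
  have one_le_q : 1 ≤ q := by
    have q_pos : 0 < (q : ℝ) := inv_pos.1 (by linarith)
    exact_mod_cast (inv_le_one₀ q_pos).1 (by linarith)
  let S : ℝ≥0∞ := SNormLESNormFDerivOfEqConst F ν 2
  let T : ℝ≥0∞ := ν s ^ (1 - (q : ℝ)⁻¹)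
  have T_ne_top : T ≠ ∞ := ENNReal.rpow_ne_top_of_nonneg (by linarith) hs
  refine ⟨(‖(ν.real s)⁻¹‖ₑ * (S * T)) ^ 2, by finiteness, fun f hf hfc => ?_⟩
  have sobolev : eLpNorm f q ν ≤ S * eLpNorm (fderiv ℝ f) 2 ν :=
    eLpNorm_le_eLpNorm_fderiv_of_eq ν hf hfc (p := 2) one_le_two (by omega) (by simpa using hq)
  have local_integral : ‖∫ y in s, f y ∂ν‖ₑ ≤ S * T * eLpNorm (fderiv ℝ f) 2 ν :=
    calc ‖∫ y in s, f y ∂ν‖ₑ ≤ eLpNorm f 1 (ν.restrict s) :=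
          (enorm_integral_le_lintegral_enorm f).trans_eq eLpNorm_one_eq_lintegral_enorm.symm
      _ ≤ eLpNorm f q (ν.restrict s) * T := by
          simpa [T] using eLpNorm_le_eLpNorm_mul_rpow_measure_univ (μ := ν.restrict s)
            (ENNReal.one_le_coe_iff.2 one_le_q) hf.continuous.aestronglyMeasurable
      _ ≤ S * eLpNorm (fderiv ℝ f) 2 ν * T := by
          gcongr
          exact (eLpNorm_restrict_le _ _ _ _).trans sobolev
      _ = _ := mul_right_comm _ _ _
  rw [setAverage_eq, enorm_smul, ← eLpNorm_fderiv_two_sq, ← mul_pow, mul_assoc]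
  gcongr

theorem exists_strictMono_forall_tendsto_setAverage [FiniteDimensional ℝ F]
    (hE : 2 < finrank ℝ E) {ι : Type*} [Countable ι] {s : ι → Set E} (hs : ∀ i, ν (s i) ≠ ∞)
    {φ : ℕ → E → F} (hφ : ∀ k, ContDiff ℝ 1 (φ k)) (hφc : ∀ k, HasCompactSupport (φ k))
    {B : ℝ≥0∞} (hB : B ≠ ∞) (hφB : ∀ k, dirichletEnergy ν (φ k) ≤ B) :
    ∃ g : ℕ → ℕ, StrictMono g ∧
      ∀ i, ∃ l, Tendsto (fun k => ⨍ y in s i, φ (g k) y ∂ν) atTop (𝓝 l) := by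
  have : ProperSpace F := FiniteDimensional.proper_real F
  refine exists_strictMono_forall_tendsto (x := fun k i => ⨍ y in s i, φ k y ∂ν) fun i => ?_
  obtain ⟨A, hA, sobolev⟩ := exists_forall_enorm_setAverage_sq_le F ν hE (hs i)
  refine isBounded_iff_forall_norm_le.2 ⟨√(A * B).toReal, Set.forall_mem_range.2 fun k => ?_⟩
  have bound : ‖⨍ y in s i, φ k y ∂ν‖ₑ ^ 2 ≤ A * B :=
    (sobolev _ (hφ k) (hφc k)).trans (mul_le_mul_right (hφB k) A)
  refine Real.le_sqrt_of_sq_le ?_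
  simpa using ENNReal.toReal_mono (ENNReal.mul_ne_top hA hB) bound

theorem IsUpperRegular.exists_strictMono_forall_lintegral_enorm_sub_sq_le
    [FiniteDimensional ℝ F] (hμ : IsUpperRegular μ C α)
    (hE : 2 < finrank ℝ E) (hα : finrank ℝ E - 2 < α) {K : Set E} (hK : IsCompact K)
    (hμK : μ Kᶜ = 0) {φ : ℕ → E → F} (hφ : ∀ k, ContDiff ℝ 1 (φ k))
    (hφc : ∀ k, HasCompactSupport (φ k)) {B : ℝ≥0∞} (hB : B ≠ ∞)
    (hφB : ∀ k, dirichletEnergy ν (φ k) ≤ B) :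
    ∃ g : ℕ → ℕ, StrictMono g ∧ ∀ ε : ℝ≥0∞, ε ≠ 0 → ∃ N, ∀ j ≥ N, ∀ k ≥ N,
      ∫⁻ x, ‖φ (g j) x - φ (g k) x‖ₑ ^ 2 ∂μ ≤ ε := by
  have : IsFiniteMeasure μ := hμ.isFiniteMeasure hK hμK
  have : CompleteSpace F := FiniteDimensional.complete ℝ F
  choose ρ s ehrling using fun m : ℕ =>
    hμ.exists_forall_lintegral_enorm_sq_le (F := F) ν hα hK hμK
      (ENNReal.inv_ne_zero.2 (ENNReal.natCast_ne_top m))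
  obtain ⟨g, hg, lim⟩ := exists_strictMono_forall_tendsto_setAverage ν hE
    (s := fun i : Σ m, s m => ball i.2 (ρ i.1)) (fun i => measure_ball_lt_top.ne) hφ hφc hB hφB
  refine ⟨g, hg, fun ε hε => ?_⟩
  have energy_term : Tendsto (fun m : ℕ => (m : ℝ≥0∞)⁻¹ * (2 * (B + B))) atTop (𝓝 0) := by
    simpa using ENNReal.Tendsto.mul_const ENNReal.tendsto_inv_nat_nhds_zero
      (Or.inr (by finiteness : 2 * (B + B) ≠ ∞))
  obtain ⟨m, hm⟩ := (energy_term.eventually_lt_const (pos_iff_ne_zero.2 hε)).exists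
  let a (k : ℕ) (u : E) : F := ⨍ y in ball u (ρ m), φ (g k) y ∂ν
  have average_term : Tendsto (fun p : ℕ × ℕ =>
      2 * μ Set.univ * ∑ u ∈ s m, ‖a p.1 u - a p.2 u‖ₑ ^ 2) atTop (𝓝 0) := by
    simpa using ENNReal.Tendsto.const_mul (tendsto_sum_enorm_sub_sq fun u hu => lim ⟨m, u, hu⟩)
      (Or.inr (by finiteness : 2 * μ Set.univ ≠ ∞))
  have total : Tendsto (fun p : ℕ × ℕ =>
      2 * μ Set.univ * ∑ u ∈ s m, ‖a p.1 u - a p.2 u‖ₑ ^ 2 + (m : ℝ≥0∞)⁻¹ * (2 * (B + B)))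
      atTop (𝓝 ((m : ℝ≥0∞)⁻¹ * (2 * (B + B)))) := by
    simpa using average_term.add_const _
  obtain ⟨N, hN⟩ := eventually_atTop_prod_self'.1 (total.eventually_le_const hm)
  refine ⟨N, fun j hj k hk => ?_⟩
  have average_sub (u : E) : ⨍ y in ball u (ρ m), (φ (g j) y - φ (g k) y) ∂ν = a j u - a k u :=
    integral_sub ((hφ _).continuous.integrable_of_hasCompactSupport (hφc _)).restrict.to_average
      ((hφ _).continuous.integrable_of_hasCompactSupport (hφc _)).restrict.to_average
  refine (ehrling m _ ((hφ (g j)).sub (hφ (g k)))).trans (le_trans ?_ (hN j hj k hk))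
  simp only [average_sub]
  gcongr
  refine (dirichletEnergy_sub_le ν (hφ _) (hφ _)).trans ?_
  gcongr <;> exact hφB _

end

theorem stmt8_general {E F : Type*} [NormedAddCommGroup E] [NormedSpace ℝ E]
    [FiniteDimensional ℝ E] [MeasurableSpace E] [BorelSpace E] (ν : Measure E)
    [ν.IsAddHaarMeasure] [NormedAddCommGroup F] [NormedSpace ℝ F] [FiniteDimensional ℝ F]
    (hE : 3 ≤ finrank ℝ E) (μ : Measure E) {K : Set E} (hK : IsCompact K) (hμK : μ Kᶜ = 0)
    {C α : ℝ} (hα : finrank ℝ E - 2 < α) (hμ : IsUpperRegular μ C α)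
    (φ : ℕ → E → F) (hφ : ∀ k, ContDiff ℝ 1 (φ k) ∧ HasCompactSupport (φ k))
    {B : ℝ} (hφB : ∀ k, ∫ x, ‖fderiv ℝ (φ k) x‖ ^ 2 ∂ν ≤ B) :
    ∃ g : ℕ → ℕ, StrictMono g ∧ ∀ ε : ℝ, 0 < ε → ∃ N : ℕ, ∀ j k, N ≤ j → N ≤ k →
      ∫ x, ‖φ (g j) x - φ (g k) x‖ ^ 2 ∂μ ≤ ε := by
  have energy_le (k : ℕ) : dirichletEnergy ν (φ k) ≤ ENNReal.ofReal B :=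
    (dirichletEnergy_eq_ofReal_integral ν (hφ k).1 (hφ k).2).trans_le
      (ENNReal.ofReal_le_ofReal (hφB k))
  obtain ⟨g, hg, cauchy⟩ := hμ.exists_strictMono_forall_lintegral_enorm_sub_sq_le ν hE hα hK hμK
    (fun k => (hφ k).1) (fun k => (hφ k).2) ENNReal.ofReal_ne_top energy_le
  refine ⟨g, hg, fun ε hε => ?_⟩
  obtain ⟨N, hN⟩ := cauchy (ENNReal.ofReal ε) (ENNReal.ofReal_pos.2 hε).ne'
  refine ⟨N, fun j k hj hk => ?_⟩
  have cont : Continuous fun x => ‖φ (g j) x - φ (g k) x‖ ^ 2 :=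
    ((hφ _).1.continuous.sub (hφ _).1.continuous).norm.pow 2
  rw [integral_eq_lintegral_of_nonneg_ae (Eventually.of_forall fun x => sq_nonneg _)
    cont.aestronglyMeasurable]
  refine ENNReal.toReal_le_of_le_ofReal hε.le ?_
  simpa only [ENNReal.ofReal_pow (norm_nonneg _), ofReal_norm] using hN j hj k hk

/-- For a compactly supported `α`-dimensional positive measure `μ` on `ℝⁿ`
(`n ≥ 3`, `α > n-2`), the inclusion `j : Ḣ¹(ℝⁿ) → L²(μ)` is compact.  Formulated
sequentially: every sequence of (smooth, compactly supported) functions bounded in the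
`Ḣ¹` norm has a subsequence whose image in `L²(μ)` is Cauchy. -/
theorem stmt8 (n : ℕ) (hn : 3 ≤ n)
    (μ : Measure (EuclideanSpace ℝ (Fin n))) [IsFiniteMeasure μ]
    (M : ℝ) (hM : 0 < M) (hsupp : μ (closedBall (0 : EuclideanSpace ℝ (Fin n)) M)ᶜ = 0)
    (Cμ α : ℝ) (hCμ : 0 ≤ Cμ) (hα : (n : ℝ) - 2 < α)
    (hdim : ∀ (x : EuclideanSpace ℝ (Fin n)) (r : ℝ), 0 < r →
      μ (ball x r) ≤ ENNReal.ofReal (Cμ * r ^ α))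
    (φ : ℕ → EuclideanSpace ℝ (Fin n) → ℝ)
    (hφ : ∀ k, ContDiff ℝ (⊤ : ℕ∞) (φ k) ∧ HasCompactSupport (φ k))
    (hbdd : ∀ k, ∫ x, ‖fderiv ℝ (φ k) x‖ ^ 2 ≤ 1) :
    ∃ g : ℕ → ℕ, StrictMono g ∧
      ∀ ε : ℝ, 0 < ε → ∃ N : ℕ, ∀ j k, N ≤ j → N ≤ k →
        ∫ x, (φ (g j) x - φ (g k) x) ^ 2 ∂μ ≤ ε := by
  simpa using stmt8_general volume (by simpa using hn) μ (isCompact_closedBall 0 M) hsupp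
    (by simpa using hα) hdim φ (fun k => ⟨(hφ k).1.of_le (by simp), (hφ k).2⟩) hbdd
end
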